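/- arXiv:1202.2942 — 4 statements merged into one kernel-verified Lean document; each statement's English description precedes it below -/
import Mathlib

section
/- Let k be a field and n ≥ 1. The kernel of the k-algebra homomorphism k[u,v,w] → k[x,y] defined by u ↦ x^n, v ↦ y^n, w ↦ xy is the principal ideal generated by uv − w^n. Consequently, the k-subalgebra k[x^n, y^n, xy] of k[x,y] is isomorphic to k[u,v,w]/(uv − w^n), the coordinate ring of the A_{n−1}-singularity. -/
/-!
The generator `uv - wⁿ` visibly lies in the kernel of `φ : u ↦ xⁿ, v ↦ yⁿ, w ↦ xy`. For the reverse
inclusion it is enough to recover the class of `p` in `k[u,v,w]/(uv - wⁿ)` from `φ p` by a `k`-linear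
map. The map `retraction` does this, and is defined on monomials: modulo `uv = wⁿ` the monomial
`uᵃvᵇwᶜ` with `b ≤ a` equals `uᵃ⁻ᵇ wⁿᵇ⁺ᶜ`, and both exponents can be read off from its image
`xⁿᵃ⁺ᶜ yⁿᵇ⁺ᶜ`; the case `a ≤ b` is symmetric. The isomorphism is then the first isomorphism theorem,
since the range of `φ` is the subalgebra generated by `xⁿ, yⁿ, xy`.
-/

open MvPolynomial

/-- The ideal `(uv - wⁿ)` of `k[u,v,w]`. -/
noncomputable abbrev relIdeal (k : Type) [Field k] (n : ℕ) : Ideal (MvPolynomial (Fin 3) k) :=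
  Ideal.span {(X 0 : MvPolynomial (Fin 3) k) * X 1 - X 2 ^ n}

/-- The class in `k[u,v,w]/(uv - wⁿ)` of `u^((i-j)/n) w^j` if `j ≤ i`, and of `v^((j-i)/n) w^i`
otherwise. It is the class of the monomials mapping to `xⁱyʲ` when there are any, that is, when
`n ∣ i - j`; for other `(i, j)` the value is irrelevant. -/
noncomputable def normalForm (k : Type) [Field k] (n i j : ℕ) :
    MvPolynomial (Fin 3) k ⧸ relIdeal k n :=
  Ideal.Quotient.mk _ (if j ≤ i then X 0 ^ ((i - j) / n) * X 2 ^ j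
    else X 1 ^ ((j - i) / n) * X 2 ^ i)

/-- The `k`-linear map `k[x,y] → k[u,v,w]/(uv - wⁿ)` sending `xⁱyʲ` to `normalForm k n i j`. -/
noncomputable def retraction (k : Type) [Field k] (n : ℕ) :
    MvPolynomial (Fin 2) k →ₗ[k] MvPolynomial (Fin 3) k ⧸ relIdeal k n :=
  (basisMonomials (Fin 2) k).constr k fun m => normalForm k n (m 0) (m 1)

lemma retraction_X_pow_mul (k : Type) [Field k] (n i j : ℕ) :
    retraction k n (X 0 ^ i * X 1 ^ j) = normalForm k n i j := by
  have h : (X 0 ^ i * X 1 ^ j : MvPolynomial (Fin 2) k) =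
      basisMonomials (Fin 2) k (Finsupp.single 0 i + Finsupp.single 1 j) := by
    simp [X_pow_eq_monomial, monomial_mul]
  rw [h, retraction, Module.Basis.constr_basis]
  simp

lemma normalForm_eq (k : Type) [Field k] (n : ℕ) (hn : 1 ≤ n) (a b c : ℕ) :
    normalForm k n (n * a + c) (n * b + c) =
      Ideal.Quotient.mk (relIdeal k n) (X 0 ^ a * X 1 ^ b * X 2 ^ c) := by
  have rel : Ideal.Quotient.mk (relIdeal k n) (X 2) ^ n =
      Ideal.Quotient.mk (relIdeal k n) (X 0) * Ideal.Quotient.mk (relIdeal k n) (X 1) := by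
    rw [← map_pow, ← map_mul, eq_comm, Ideal.Quotient.mk_eq_mk_iff_sub_mem]
    exact Ideal.subset_span rfl
  unfold normalForm
  rcases le_or_gt b a with h | h
  · obtain ⟨d, rfl⟩ := Nat.exists_eq_add_of_le h
    have h1 : n * b + c ≤ n * (b + d) + c := by gcongr
    have h2 : (n * (b + d) + c - (n * b + c)) / n = d := by
      rw [show n * (b + d) + c - (n * b + c) = n * d by rw [mul_add]; omega]
      exact Nat.mul_div_cancel_left d hn
    rw [if_pos h1, h2]
    simp only [map_mul, map_pow, pow_add, pow_mul, rel]
    ring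
  · obtain ⟨d, rfl⟩ := Nat.exists_eq_add_of_lt h
    have h1 : ¬ n * (a + d + 1) + c ≤ n * a + c := by
      have : n * a < n * (a + d + 1) := by gcongr
      omega
    have h2 : (n * (a + d + 1) + c - (n * a + c)) / n = d + 1 := by
      rw [show n * (a + d + 1) + c - (n * a + c) = n * (d + 1) by
        rw [add_assoc, mul_add n a]; omega]
      exact Nat.mul_div_cancel_left _ hn
    rw [if_neg h1, h2]
    simp only [map_mul, map_pow, pow_add, pow_mul, rel]
    ring

lemma retraction_aeval (k : Type) [Field k] (n : ℕ) (hn : 1 ≤ n) (p : MvPolynomial (Fin 3) k) :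
    retraction k n (aeval (R := k)
        ![(X 0 : MvPolynomial (Fin 2) k) ^ n, (X 1 : MvPolynomial (Fin 2) k) ^ n,
          (X 0 : MvPolynomial (Fin 2) k) * X 1] p) =
      Ideal.Quotient.mk (relIdeal k n) p := by
  induction p using MvPolynomial.induction_on' with
  | add p q hp hq => rw [map_add, map_add, hp, hq, map_add]
  | monomial m r =>
    have hm : monomial m r = r • (X 0 ^ m 0 * X 1 ^ m 1 * X 2 ^ m 2 : MvPolynomial (Fin 3) k) := by
      rw [monomial_eq, Finsupp.prod_fintype _ _ (by simp), Fin.prod_univ_three, smul_eq_C_mul]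
    have himg : aeval (R := k)
        ![(X 0 : MvPolynomial (Fin 2) k) ^ n, (X 1 : MvPolynomial (Fin 2) k) ^ n,
          (X 0 : MvPolynomial (Fin 2) k) * X 1]
          (X 0 ^ m 0 * X 1 ^ m 1 * X 2 ^ m 2 : MvPolynomial (Fin 3) k) =
        X 0 ^ (n * m 0 + m 2) * X 1 ^ (n * m 1 + m 2) := by
      simp
      ring
    rw [hm, map_smul, map_smul, himg, retraction_X_pow_mul, normalForm_eq k n hn]
    rfl

/--
Let `k` be a field and `n ≥ 1`. The kernel of the `k`-algebra map `k[u,v,w] → k[x,y]`,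
`u ↦ xⁿ, v ↦ yⁿ, w ↦ xy`, is the principal ideal `(uv - wⁿ)`; consequently the subalgebra
`k[xⁿ, yⁿ, xy]` is isomorphic to `k[u,v,w]/(uv - wⁿ)`, the coordinate ring of the
`A_{n-1}`-singularity.
-/
theorem ker_to_A_n_singularity (k : Type) [Field k] (n : ℕ) (hn : 1 ≤ n) :
    RingHom.ker (aeval (R := k)
        ![(X 0 : MvPolynomial (Fin 2) k) ^ n, (X 1 : MvPolynomial (Fin 2) k) ^ n,
          (X 0 : MvPolynomial (Fin 2) k) * X 1]) =
      Ideal.span {(X 0 : MvPolynomial (Fin 3) k) * X 1 - X 2 ^ n} ∧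
    Nonempty ((MvPolynomial (Fin 3) k ⧸
        Ideal.span {(X 0 : MvPolynomial (Fin 3) k) * X 1 - X 2 ^ n}) ≃ₐ[k]
      Algebra.adjoin k
        ({(X 0 : MvPolynomial (Fin 2) k) ^ n, (X 1 : MvPolynomial (Fin 2) k) ^ n,
          (X 0 : MvPolynomial (Fin 2) k) * X 1} : Set (MvPolynomial (Fin 2) k))) := by
  have hker : RingHom.ker (aeval (R := k)
        ![(X 0 : MvPolynomial (Fin 2) k) ^ n, (X 1 : MvPolynomial (Fin 2) k) ^ n,
          (X 0 : MvPolynomial (Fin 2) k) * X 1]) = relIdeal k n := by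
    apply le_antisymm
    · intro p hp
      rw [← Ideal.Quotient.eq_zero_iff_mem, ← retraction_aeval k n hn, (RingHom.mem_ker).1 hp,
        map_zero]
    · rw [Ideal.span_le, Set.singleton_subset_iff, SetLike.mem_coe, RingHom.mem_ker]
      simp [mul_pow]
  refine ⟨hker, ⟨(Ideal.quotientEquivAlgOfEq k hker.symm).trans
    ((Ideal.quotientKerEquivRange _).trans (Subalgebra.equivOfEq _ _ ?_))⟩⟩
  rw [← Algebra.adjoin_range_eq_range_aeval]
  congr 1
  ext q
  simp
  tauto
end

section
/- Let k be a field whose characteristic is odd and does not divide n, where n ≥ 2, and let ζ ∈ k be a primitive 2n-th root of unity. Let G ⊂ SL_2(k) be the binary dihedral group of order 4n generated by the matrices diag(ζ, ζ^{−1}) and [[0,1],[−1,0]], acting on the polynomial ring k[x,y] by linear substitution of the variables. Then the ring of invariants k[x,y]^G is exactly the k-subalgebra generated by x^{2n} + y^{2n}, (xy)^2, and xy(x^{2n} − y^{2n}). -/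
/-!
Write `σ` for the substitution `x ↦ ζx, y ↦ ζ⁻¹y` and `τ` for `x ↦ y, y ↦ -x`. Since `σ` scales
`x^a y^b` by `ζ^a ζ^{-b}`, a `σ`-invariant polynomial only involves monomials with
`a ≡ b mod 2n`. If `f` is also `τ`-invariant then `2f = f + τ f` is a linear combination of the
polynomials `x^a y^b + τ(x^a y^b)` for such monomials, and up to sign these are
`(xy)^m (x^{2nj} + (-1)^m y^{2nj})`. With `s = x^{2n}` and `t = y^{2n}`, the recurrence
`w_{j+2} = (s + t) w_{j+1} - s t w_j`, satisfied by `s^j ± t^j`, puts all of these in the subalgebra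
generated by `x^{2n} + y^{2n}`, `(xy)²` and `xy(x^{2n} - y^{2n})`
(`even_family_mem`, `odd_family_mem`). Finally `2` is invertible in `k`.
-/

open MvPolynomial

/-- The action of a `2 × 2` matrix on `k[x,y]` by linear substitution of the variables. -/
noncomputable def matrixSubst {k : Type} [CommRing k] (g : Matrix (Fin 2) (Fin 2) k) :
    MvPolynomial (Fin 2) k →ₐ[k] MvPolynomial (Fin 2) k :=
  aeval (fun i => ∑ j, C (g i j) * X j)

/-- Substitution reverses products; only closure of the stabilizer under products is needed. -/
theorem matrixSubst_mul {k : Type} [CommRing k] (g h : Matrix (Fin 2) (Fin 2) k)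
    (f : MvPolynomial (Fin 2) k) :
    matrixSubst (g * h) f = matrixSubst h (matrixSubst g f) := by
  have : matrixSubst (g * h) = (matrixSubst h).comp (matrixSubst g) := by
    ext i : 1
    simp [matrixSubst, Matrix.mul_apply, Fin.sum_univ_two, MvPolynomial.algebraMap_eq]
    ring
  rw [this]; rfl

theorem matrixSubst_one {k : Type} [CommRing k] (f : MvPolynomial (Fin 2) k) :
    matrixSubst (1 : Matrix (Fin 2) (Fin 2) k) f = f := by
  have : matrixSubst (1 : Matrix (Fin 2) (Fin 2) k) = AlgHom.id k _ := by
    ext i : 1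
    fin_cases i <;> simp [matrixSubst, Fin.sum_univ_two]
  rw [this]; rfl

section Generators

variable {k : Type} [Field k] (ζ : k)

theorem diag_X0 : matrixSubst !![ζ, 0; 0, ζ⁻¹] (X 0) = C ζ * X 0 := by
  simp [matrixSubst, Fin.sum_univ_two]

theorem diag_X1 : matrixSubst !![ζ, 0; 0, ζ⁻¹] (X 1) = C ζ⁻¹ * X 1 := by
  simp [matrixSubst, Fin.sum_univ_two]

theorem tau_X0 : matrixSubst !![(0 : k), 1; -1, 0] (X 0) = X 1 := by
  simp [matrixSubst, Fin.sum_univ_two]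

theorem tau_X1 : matrixSubst !![(0 : k), 1; -1, 0] (X 1) = -X 0 := by
  simp [matrixSubst, Fin.sum_univ_two]

/-- The substitution `diag(ζ, ζ⁻¹)` scales each monomial `x^a y^b` by `ζ^a ζ^{-b}`. -/
theorem coeff_diag (m : Fin 2 →₀ ℕ) (f : MvPolynomial (Fin 2) k) :
    coeff m (matrixSubst !![ζ, 0; 0, ζ⁻¹] f) = ζ ^ m 0 * ζ⁻¹ ^ m 1 * coeff m f := by
  classical
  induction f using MvPolynomial.induction_on' with
  | monomial u a =>
    have : matrixSubst !![ζ, 0; 0, ζ⁻¹] (monomial u a)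
        = C (ζ ^ u 0 * ζ⁻¹ ^ u 1) * monomial u a := by
      rw [monomial_fin_two, mul_assoc, map_mul, map_mul, map_pow, map_pow, diag_X0, diag_X1,
        ← MvPolynomial.algebraMap_eq, AlgHom.commutes, MvPolynomial.algebraMap_eq]
      simp only [map_mul, map_pow]
      ring
    rw [this, coeff_C_mul, coeff_monomial]
    split_ifs with h
    · rw [h]
    · simp
  | add p q hp hq => rw [map_add, coeff_add, coeff_add, hp, hq]; ring

end Generators

section Families

variable {k : Type} [Field k] {A : Subalgebra k (MvPolynomial (Fin 2) k)}
  {s t p : MvPolynomial (Fin 2) k}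

theorem even_family_mem (hadd : s + t ∈ A) (hmul : s * t ∈ A) (j : ℕ) :
    s ^ j + t ^ j ∈ A := by
  induction j using Nat.twoStepInduction with
  | zero => simpa using A.add_mem A.one_mem A.one_mem
  | one => simpa using hadd
  | more j h0 h1 =>
    convert A.sub_mem (A.mul_mem hadd h1) (A.mul_mem hmul h0) using 1
    ring

theorem odd_family_mem (hadd : s + t ∈ A) (hmul : s * t ∈ A) (hodd : p * (s - t) ∈ A) (j : ℕ) :
    p * (s ^ j - t ^ j) ∈ A := by
  induction j using Nat.twoStepInduction with
  | zero => simp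
  | one => simpa using hodd
  | more j h0 h1 =>
    convert A.sub_mem (A.mul_mem hadd h1) (A.mul_mem hmul h0) using 1
    ring

/-- Applied with `s = x^{2n}`, `t = y^{2n}`, `p = xy`: even powers of `p` reduce to `s ^ j + t ^ j`,
odd ones to `p * (s ^ j - t ^ j)`. -/
theorem family_mem (hadd : s + t ∈ A) (hmul : s * t ∈ A) (hp : p ^ 2 ∈ A)
    (hodd : p * (s - t) ∈ A) (m j : ℕ) : p ^ m * (s ^ j + (-1) ^ m * t ^ j) ∈ A := by
  obtain ⟨r, rfl | rfl⟩ := Nat.even_or_odd' m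
  · convert A.mul_mem (A.pow_mem hp r) (even_family_mem hadd hmul j) using 1
    simp [pow_mul]
  · convert A.mul_mem (A.pow_mem hp r) (odd_family_mem hadd hmul hodd j) using 1
    simp [pow_mul, pow_succ]
    ring

end Families

/--
Let `k` be a field of odd characteristic not dividing `n` (`n ≥ 2`), and `ζ ∈ k` a primitive
`2n`-th root of unity. Let `G ⊆ SL₂(k)` be the binary dihedral group of order `4n` generated by
`diag(ζ, ζ⁻¹)` and `[[0,1],[-1,0]]`, acting on `k[x,y]` by linear substitutions. Then
`k[x,y]^G` is exactly the subalgebra generated by `x^{2n} + y^{2n}`, `(xy)²` and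
`xy(x^{2n} - y^{2n})`. (Since the two generators generate a finite group, invariance under the
multiplicative closure of the two matrices is the same as invariance under `G`.)
-/
theorem binary_dihedral_invariants (k : Type) [Field k] (n : ℕ) (hn : 2 ≤ n)
    (hodd : Odd (ringChar k)) (hchar : ¬ (ringChar k ∣ n))
    (ζ : k) (hζ : IsPrimitiveRoot ζ (2 * n)) (f : MvPolynomial (Fin 2) k) :
    (∀ g ∈ Submonoid.closure
        ({!![ζ, 0; 0, ζ⁻¹], !![0, 1; -1, 0]} : Set (Matrix (Fin 2) (Fin 2) k)),
      matrixSubst g f = f) ↔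
    f ∈ Algebra.adjoin k
      ({X 0 ^ (2 * n) + X 1 ^ (2 * n),
        ((X 0 : MvPolynomial (Fin 2) k) * X 1) ^ 2,
        (X 0 : MvPolynomial (Fin 2) k) * X 1 * (X 0 ^ (2 * n) - X 1 ^ (2 * n))} :
        Set (MvPolynomial (Fin 2) k)) := by
  set A := Algebra.adjoin k
      ({X 0 ^ (2 * n) + X 1 ^ (2 * n),
        ((X 0 : MvPolynomial (Fin 2) k) * X 1) ^ 2,
        (X 0 : MvPolynomial (Fin 2) k) * X 1 * (X 0 ^ (2 * n) - X 1 ^ (2 * n))} :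
        Set (MvPolynomial (Fin 2) k)) with hA
  have hζ0 : ζ ≠ 0 := hζ.ne_zero (by omega)
  have h1 : ζ ^ (2 * n) = 1 := hζ.pow_eq_one
  constructor
  · intro h
    have hσ := h _ (Submonoid.subset_closure (Set.mem_insert _ _))
    have hτ := h _ (Submonoid.subset_closure (Set.mem_insert_of_mem _ (Set.mem_singleton _)))
    have hadd : (X 0 ^ (2 * n) + X 1 ^ (2 * n) : MvPolynomial (Fin 2) k) ∈ A :=
      Algebra.subset_adjoin (by simp)
    have hp : ((X 0 : MvPolynomial (Fin 2) k) * X 1) ^ 2 ∈ A :=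
      Algebra.subset_adjoin (by simp)
    have hpodd : (X 0 : MvPolynomial (Fin 2) k) * X 1 * (X 0 ^ (2 * n) - X 1 ^ (2 * n)) ∈ A :=
      Algebra.subset_adjoin (by simp)
    have hmul : (X 0 ^ (2 * n) * X 1 ^ (2 * n) : MvPolynomial (Fin 2) k) ∈ A := by
      rw [← mul_pow, pow_mul]
      exact A.pow_mem hp n
    have hfam := family_mem hadd hmul hp hpodd
    have h2 : (2 : k) ≠ 0 := Ring.two_ne_zero (by rintro h; rw [h] at hodd; revert hodd; decide)
    -- Symmetrize under `τ` term by term; `σ`-invariance restricts the exponents that occur.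
    have hmon : ∀ m ∈ f.support, monomial m (coeff m f)
        + matrixSubst !![(0 : k), 1; -1, 0] (monomial m (coeff m f)) ∈ A := by
      intro m hm
      have hc : coeff m f ≠ 0 := mem_support_iff.mp hm
      have hpow : ζ ^ m 0 = ζ ^ m 1 := by
        have e := coeff_diag ζ m f
        rw [hσ] at e
        have e1 : ζ ^ m 0 * ζ⁻¹ ^ m 1 = 1 := mul_right_cancel₀ hc (by rw [← e, one_mul])
        rw [inv_pow] at e1
        exact (mul_inv_eq_one₀ (pow_ne_zero _ hζ0)).mp e1
      have hmod : m 0 ≡ m 1 [MOD 2 * n] := by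
        rw [hζ.eq_orderOf]
        exact (isOfFinOrder_iff_pow_eq_one.mpr ⟨2 * n, by omega, h1⟩).pow_eq_pow_iff_modEq.mp hpow
      rw [monomial_fin_two, mul_assoc, map_mul, map_mul, map_pow, map_pow, tau_X0, tau_X1,
        ← MvPolynomial.algebraMap_eq, AlgHom.commutes, ← mul_add, ← Algebra.smul_def]
      refine A.smul_mem ?_ _
      rcases le_total (m 1) (m 0) with hle | hle
      · obtain ⟨j, hj⟩ := (Nat.modEq_iff_dvd' hle).mp hmod.symm
        have e : m 0 = m 1 + 2 * n * j := by omega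
        rw [e]
        convert hfam (m 1) j using 1
        rw [neg_pow (X 0 : MvPolynomial (Fin 2) k)]
        ring
      · obtain ⟨j, hj⟩ := (Nat.modEq_iff_dvd' hle).mp hmod
        have e : m 1 = m 0 + 2 * n * j := by omega
        rw [e]
        convert A.mul_mem (A.pow_mem (A.neg_mem A.one_mem) (m 0)) (hfam (m 0) j) using 1
        have e2 : ((-1 : MvPolynomial (Fin 2) k) ^ m 0) * (-1) ^ m 0 = 1 := by
          rw [← mul_pow]; simp
        have e3 : (-1 : MvPolynomial (Fin 2) k) ^ (m 0 + 2 * n * j) = (-1) ^ m 0 := by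
          rw [pow_add, mul_assoc 2, pow_mul]; simp
        rw [neg_pow (X 0 : MvPolynomial (Fin 2) k), e3]
        linear_combination (-X 0 ^ m 0 * X 1 ^ m 0 * X 1 ^ (2 * n * j)) * e2
    have hsum : f + f ∈ A := by
      nth_rewrite 2 [← hτ]
      have e : f + matrixSubst !![(0 : k), 1; -1, 0] f = ∑ m ∈ f.support, (monomial m (coeff m f)
          + matrixSubst !![(0 : k), 1; -1, 0] (monomial m (coeff m f))) := by
        rw [Finset.sum_add_distrib, ← map_sum, ← f.as_sum]
      rw [e]
      exact A.sum_mem hmon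
    have hf : f = (2 : k)⁻¹ • (f + f) := by
      rw [← two_smul k f, smul_smul, inv_mul_cancel₀ h2, one_smul]
    rw [hf]
    exact A.smul_mem hsum _
  · intro hf g hg
    induction hg using Submonoid.closure_induction with
    | mem g hg =>
      suffices A ≤ AlgHom.equalizer (matrixSubst g) (AlgHom.id k _) from this hf
      rw [hA, Algebra.adjoin_le_iff]
      have hC : (C ζ : MvPolynomial (Fin 2) k) * C ζ⁻¹ = 1 := by
        rw [← map_mul, mul_inv_cancel₀ hζ0, map_one]
      have hC1 : (C ζ : MvPolynomial (Fin 2) k) ^ (2 * n) = 1 := by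
        rw [← map_pow, h1, map_one]
      have hC2 : (C ζ⁻¹ : MvPolynomial (Fin 2) k) ^ (2 * n) = 1 := by
        rw [← map_pow, inv_pow, h1, inv_one, map_one]
      have hneg : (-X 0 : MvPolynomial (Fin 2) k) ^ (2 * n) = X 0 ^ (2 * n) :=
        (even_two_mul n).neg_pow _
      rcases hg with rfl | rfl <;> rintro _ (rfl | rfl | rfl) <;>
        simp only [SetLike.mem_coe, AlgHom.mem_equalizer, map_add, map_sub, map_mul, map_pow,
          diag_X0, diag_X1, tau_X0, tau_X1, AlgHom.id_apply, hneg]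
      · rw [mul_pow, mul_pow, hC1, hC2, one_mul, one_mul]
      · linear_combination (X 0 ^ 2 * X 1 ^ 2 * (C ζ * C ζ⁻¹ + 1)) * hC
      · rw [mul_pow, mul_pow, hC1, hC2, one_mul, one_mul]
        linear_combination (X 0 * X 1 * (X 0 ^ (2 * n) - X 1 ^ (2 * n))) * hC
      · ring
      · ring
      · ring
    | one => exact matrixSubst_one f
    | mul g h _ _ ihg ihh => rw [matrixSubst_mul, ihg, ihh]
end

section
/- Let k be a field of characteristic ≠ 2 and n ≥ 2. The kernel of the k-algebra homomorphism k[u,v,w] → k[x,y] defined by u ↦ x^{2n} + y^{2n}, v ↦ (xy)^2, w ↦ xy(x^{2n} − y^{2n}) is the principal ideal generated by w^2 − u^2 v + 4 v^{n+1}. Consequently, the k-subalgebra k[x^{2n}+y^{2n}, (xy)^2, xy(x^{2n}−y^{2n})] of k[x,y] is isomorphic to k[u,v,w]/(w^2 − u^2 v + 4v^{n+1}), a D_{n+2}-singularity. -/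
/-!
Modulo `w² - u²v + 4v^{n+1}` every polynomial in `u, v, w` is of the form `a(u,v) + b(u,v) w`
(`exists_normal_form`). Suppose it maps to zero. The swap `x ↔ y` fixes the images of `u` and `v`
and negates the image of `w`, so, as `2` is invertible, `a(u,v)` and `b(u,v) w` both map to zero;
since the image of `w` is nonzero, `b(u,v)` maps to zero too. Finally the images of `u` and `v` are
algebraically independent (`evalUV_eq_zero`): setting `y = 0` in a relation `q(u,v) = 0` gives
`q(x^{2n}, 0) = 0`, so `v` divides `q`, and one descends on the degree in `v`.
-/

open MvPolynomial

/-- Evaluation of a two-variable polynomial, encoded as an element of `k[u][v]` with inner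
variable `u`, at a pair `(U, V)`. -/
noncomputable def evalUV {k A : Type*} [Field k] [CommRing A] [Algebra k A] (U V : A) :
    Polynomial (Polynomial k) →+* A :=
  Polynomial.eval₂RingHom (Polynomial.aeval U).toRingHom V

lemma evalUV_X {k A : Type*} [Field k] [CommRing A] [Algebra k A] (U V : A) :
    evalUV (k := k) U V Polynomial.X = V := by
  simp [evalUV]

lemma evalUV_C {k A : Type*} [Field k] [CommRing A] [Algebra k A] (U V : A) (p : Polynomial k) :
    evalUV (k := k) U V (Polynomial.C p) = Polynomial.aeval U p := by
  simp [evalUV]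

lemma map_evalUV {k A B : Type*} [Field k] [CommRing A] [Algebra k A] [CommRing B] [Algebra k B]
    (f : A →ₐ[k] B) (U V : A) (q : Polynomial (Polynomial k)) :
    f (evalUV U V q) = evalUV (f U) (f V) q := by
  induction q using Polynomial.induction_on' with
  | add p q hp hq => simp [hp, hq]
  | monomial i p =>
    rw [← Polynomial.C_mul_X_pow_eq_monomial]
    simp [evalUV_X, evalUV_C, Polynomial.aeval_algHom_apply]

/-- `x^m + y^m` and `(xy)²` are algebraically independent. -/
lemma evalUV_eq_zero {k : Type*} [Field k] {m : ℕ} (hm : 0 < m) (q : Polynomial (Polynomial k))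
    (hq : evalUV ((X 0 : MvPolynomial (Fin 2) k) ^ m + X 1 ^ m) ((X 0 * X 1) ^ 2) q = 0) :
    q = 0 := by
  induction hd : q.natDegree using Nat.strong_induction_on generalizing q with
  | _ d ih =>
    have h0 : q.coeff 0 = 0 := by
      -- Specialise `x = T`, `y = 0`.
      have h := congrArg (aeval (R := k) ![(Polynomial.X : Polynomial k), 0]) hq
      rw [map_evalUV, ← Polynomial.divX_mul_X_add q, map_add, map_mul, evalUV_X, evalUV_C] at h
      have h' : Polynomial.aeval ((Polynomial.X : Polynomial k) ^ m) (q.coeff 0) = 0 := by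
        simpa [hm.ne'] using h
      rw [← Polynomial.expand_aeval, Polynomial.aeval_X_left_apply] at h'
      exact (Polynomial.expand_eq_zero hm).1 h'
    have hdiv : q = q.divX * Polynomial.X := by
      conv_lhs => rw [← Polynomial.divX_mul_X_add q, h0]
      simp
    have h1 : evalUV ((X 0 : MvPolynomial (Fin 2) k) ^ m + X 1 ^ m) ((X 0 * X 1) ^ 2) q.divX
        = 0 := by
      rw [hdiv, map_mul, evalUV_X] at hq
      exact (mul_eq_zero.1 hq).resolve_right (by simp [X_ne_zero])
    rcases Nat.eq_zero_or_pos d with rfl | hpos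
    · rw [Polynomial.eq_C_of_natDegree_eq_zero hd, h0, map_zero]
    · have := ih q.divX.natDegree
        (by rw [Polynomial.natDegree_divX_eq_natDegree_tsub_one]; omega) q.divX h1 rfl
      rw [hdiv, this, zero_mul]

/-- Division with remainder by a polynomial `w² - r(u,v)`, monic of degree two in `w`. -/
lemma exists_normal_form {k : Type*} [Field k] (r : Polynomial (Polynomial k))
    (p : MvPolynomial (Fin 3) k) :
    ∃ a b : Polynomial (Polynomial k),
      p - (evalUV (X 0) (X 1) a + evalUV (X 0) (X 1) b * X 2) ∈
        Ideal.span {(X 2 : MvPolynomial (Fin 3) k) ^ 2 - evalUV (X 0) (X 1) r} := by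
  induction p using MvPolynomial.induction_on with
  | C c =>
    refine ⟨Polynomial.C (Polynomial.C c), 0, ?_⟩
    simp [evalUV_C, MvPolynomial.algebraMap_eq]
  | add p q hp hq =>
    obtain ⟨a, b, h⟩ := hp
    obtain ⟨a', b', h'⟩ := hq
    refine ⟨a + a', b + b', ?_⟩
    convert add_mem h h' using 1
    simp only [map_add]
    ring
  | mul_X p i hp =>
    obtain ⟨a, b, h⟩ := hp
    fin_cases i
    · refine ⟨a * Polynomial.C Polynomial.X, b * Polynomial.C Polynomial.X, ?_⟩
      convert Ideal.mul_mem_right (X 0) _ h using 1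
      simp only [map_mul, evalUV_C, Polynomial.aeval_X, Fin.zero_eta]
      ring
    · refine ⟨a * Polynomial.X, b * Polynomial.X, ?_⟩
      convert Ideal.mul_mem_right (X 1) _ h using 1
      simp only [map_mul, evalUV_X, Fin.mk_one]
      ring
    · refine ⟨b * r, a, ?_⟩
      convert add_mem (Ideal.mul_mem_right (X 2) _ h) (Ideal.mul_mem_left _
        (evalUV (X 0) (X 1) b) (Ideal.mem_span_singleton_self _)) using 1
      simp only [map_mul, Fin.reduceFinMk]
      ring

/--
Let `k` be a field of characteristic `≠ 2` and `n ≥ 2`. The kernel of the `k`-algebra map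
`k[u,v,w] → k[x,y]`, `u ↦ x^{2n} + y^{2n}`, `v ↦ (xy)²`, `w ↦ xy(x^{2n} - y^{2n})`, is the
principal ideal `(w² - u²v + 4v^{n+1})`; consequently the subalgebra generated by these three
elements is isomorphic to `k[u,v,w]/(w² - u²v + 4v^{n+1})`, a `D_{n+2}`-singularity.
-/
theorem ker_to_D_n_singularity (k : Type) [Field k] (hk : ringChar k ≠ 2)
    (n : ℕ) (hn : 2 ≤ n) :
    RingHom.ker (aeval (R := k)
        ![(X 0 : MvPolynomial (Fin 2) k) ^ (2 * n) + (X 1 : MvPolynomial (Fin 2) k) ^ (2 * n),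
          ((X 0 : MvPolynomial (Fin 2) k) * X 1) ^ 2,
          (X 0 : MvPolynomial (Fin 2) k) * X 1 *
            ((X 0 : MvPolynomial (Fin 2) k) ^ (2 * n) - (X 1 : MvPolynomial (Fin 2) k) ^ (2 * n))]) =
      Ideal.span {(X 2 : MvPolynomial (Fin 3) k) ^ 2 - X 0 ^ 2 * X 1 + 4 * X 1 ^ (n + 1)} ∧
    Nonempty ((MvPolynomial (Fin 3) k ⧸
        Ideal.span {(X 2 : MvPolynomial (Fin 3) k) ^ 2 - X 0 ^ 2 * X 1 + 4 * X 1 ^ (n + 1)}) ≃ₐ[k]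
      Algebra.adjoin k
        ({(X 0 : MvPolynomial (Fin 2) k) ^ (2 * n) + (X 1 : MvPolynomial (Fin 2) k) ^ (2 * n),
          ((X 0 : MvPolynomial (Fin 2) k) * X 1) ^ 2,
          (X 0 : MvPolynomial (Fin 2) k) * X 1 *
            ((X 0 : MvPolynomial (Fin 2) k) ^ (2 * n) -
              (X 1 : MvPolynomial (Fin 2) k) ^ (2 * n))} : Set (MvPolynomial (Fin 2) k))) := by
  set U : MvPolynomial (Fin 2) k := X 0 ^ (2 * n) + X 1 ^ (2 * n) with hU
  set V : MvPolynomial (Fin 2) k := (X 0 * X 1) ^ 2 with hV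
  set W : MvPolynomial (Fin 2) k := X 0 * X 1 * (X 0 ^ (2 * n) - X 1 ^ (2 * n)) with hW
  set f : MvPolynomial (Fin 3) k := X 2 ^ 2 - X 0 ^ 2 * X 1 + 4 * X 1 ^ (n + 1) with hf
  have h2 : (2 : MvPolynomial (Fin 2) k) ≠ 0 := by
    have := (map_ne_zero_iff (C : k →+* MvPolynomial (Fin 2) k) (C_injective _ _)).2
      (Ring.two_ne_zero hk)
    rwa [map_ofNat] at this
  have hW0 : W ≠ 0 := by
    refine mul_ne_zero (mul_ne_zero (X_ne_zero _) (X_ne_zero _)) fun h => ?_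
    have := congrArg (aeval (R := k) ![(1 : k), 0]) h
    simp [show n ≠ 0 by omega] at this
  have hfker : aeval (R := k) ![U, V, W] f = 0 := by
    have h4 : aeval (R := k) ![U, V, W] (4 : MvPolynomial (Fin 3) k) = 4 := map_ofNat _ 4
    rw [hf, map_add, map_sub, map_mul, map_mul, h4]
    simp only [map_pow, aeval_X, Matrix.cons_val, hU, hV, hW]
    ring
  have hker : RingHom.ker (aeval (R := k) ![U, V, W]) = Ideal.span {f} := by
    apply le_antisymm
    · intro p hp
      obtain ⟨a, b, h⟩ := exists_normal_form
        (Polynomial.C ((Polynomial.X : Polynomial k) ^ 2) * Polynomial.X - 4 * Polynomial.X ^ (n + 1)) p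
      have hfr : (X 2 : MvPolynomial (Fin 3) k) ^ 2 - evalUV (X 0) (X 1)
          (Polynomial.C ((Polynomial.X : Polynomial k) ^ 2) * Polynomial.X
            - 4 * Polynomial.X ^ (n + 1)) = f := by
        simp only [map_sub, map_mul, map_pow, map_ofNat, evalUV_X, evalUV_C, Polynomial.aeval_X, hf]
        ring
      rw [hfr] at h
      have hmem : aeval (R := k) ![U, V, W]
          (p - (evalUV (X 0) (X 1) a + evalUV (X 0) (X 1) b * X 2)) = 0 := by
        obtain ⟨c, hc⟩ := Ideal.mem_span_singleton.1 h
        rw [hc, map_mul, hfker, zero_mul]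
      rw [map_sub, RingHom.mem_ker.1 hp, map_add, map_mul, map_evalUV, map_evalUV] at hmem
      have e1 : evalUV U V a + evalUV U V b * W = 0 := by
        rw [zero_sub, neg_eq_zero] at hmem
        simpa using hmem
      have e2 : evalUV U V a - evalUV U V b * W = 0 := by
        -- The swap `x ↔ y` fixes `U` and `V` and negates `W`.
        have := congrArg (aeval (R := k) ![(X 1 : MvPolynomial (Fin 2) k), X 0]) e1
        rw [map_add, map_mul, map_evalUV, map_evalUV] at this
        have sU : aeval (R := k) ![(X 1 : MvPolynomial (Fin 2) k), X 0] U = U := by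
          simp [hU, add_comm]
        have sV : aeval (R := k) ![(X 1 : MvPolynomial (Fin 2) k), X 0] V = V := by
          simp [hV, mul_comm]
        have sW : aeval (R := k) ![(X 1 : MvPolynomial (Fin 2) k), X 0] W = -W := by
          simp [hW]
          ring
        rw [sU, sV, sW, map_zero] at this
        linear_combination this
      have ha : evalUV U V a = 0 :=
        (mul_eq_zero.1 (show 2 * evalUV U V a = 0 by linear_combination e1 + e2)).resolve_left h2
      have hb : evalUV U V b = 0 := by
        rw [ha, zero_add] at e1
        exact (mul_eq_zero.1 e1).resolve_right hW0
      rw [evalUV_eq_zero (by omega) a ha, evalUV_eq_zero (by omega) b hb] at h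
      simpa using h
    · rwa [Ideal.span_singleton_le_iff_mem, RingHom.mem_ker]
  refine ⟨hker, ⟨(Ideal.quotientEquivAlgOfEq k hker.symm).trans
    ((Ideal.quotientKerEquivRange _).trans (Subalgebra.equivOfEq _ _ ?_))⟩⟩
  rw [← Algebra.adjoin_range_eq_range_aeval]
  congr 1
  ext z
  simp only [Set.mem_range, Fin.exists_fin_succ, Set.mem_insert_iff, Set.mem_singleton_iff]
  simp [eq_comm]
end

section
/- Let k be a field of characteristic p ≥ 3 and n ≥ 2 an integer. Let g = w^2 − u^2 v − 4v^{n+1} ∈ k[u,v,w] and let J be the ideal (g, ∂g/∂u, ∂g/∂v, ∂g/∂w). Then dim_k k[u,v,w]/J = n + 2. (This computes dim_k Ext^1(L_{X/k}, O_X) for the D_{n+2}-singularity X = Spec k[u,v,w]/(g) in characteristic p ≥ 3: it equals the number n + 2 of (−2)-curves on the minimal resolution, for every p ≥ 3.) -/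
open MvPolynomial

/-!
Since `∂_w g = 2w`, `∂_u g = -2uv` and `∂_v g = -(u² + 4(n+1)vⁿ)` with `2` invertible, the
Tjurina ideal is `J = (w, uv, u² + c vⁿ, v^{n+1})` with `c = 4(n+1)`
(`tjurinaIdeal_eq`); this holds whether or not `p` divides `n+1`. The claim is that
`1, v, …, vⁿ, u` is a basis of the quotient.

* Spanning (`exists_sub_normalForm_mem`): modulo `J` the span of these elements contains `1`
  and is stable under multiplication by `u`, `v`, `w`.
* Independence (`normalCoeff_eq_zero`): the linear map `normalCoeff` which records the coefficients
  of `1, v, …, v^{n-1}` and `u`, and the coefficient of `vⁿ` minus `c` times that of `u²`,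
  vanishes on `J` and is a left inverse of the map `normalForm` sending coordinates to the
  corresponding combination of the basis.

Hence `J` is the kernel of the surjection `normalCoeff` onto a space of dimension `n + 2`.
-/

namespace TjurinaD

variable {k : Type} [Field k]

/-- The simplified generators `w, uv, u² + c vⁿ, v^{n+1}`, for an arbitrary scalar `c`. -/
noncomputable def simpleIdeal (n : ℕ) (c : k) : Ideal (MvPolynomial (Fin 3) k) :=
  Ideal.span {X 2, X 0 * X 1, X 0 ^ 2 + C c * X 1 ^ n, X 1 ^ (n + 1)}

/-- The coordinates of a polynomial modulo `simpleIdeal n c`: the first factor holds those of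
`1, v, …, vⁿ`, the second that of `u`. The correction at `vⁿ` comes from `u² ≡ -c vⁿ`. -/
noncomputable def normalCoeff (n : ℕ) (c : k) :
    MvPolynomial (Fin 3) k →ₗ[k] (Fin (n + 1) → k) × k :=
  (LinearMap.pi fun i : Fin (n + 1) =>
    lcoeff k (Finsupp.single 1 (i : ℕ)) -
      if (i : ℕ) = n then c • lcoeff k (Finsupp.single 0 2) else 0).prod
    (lcoeff k (Finsupp.single 0 1))

/-- The polynomial `∑ aᵢ vⁱ + b u` with coordinates `(a, b)`. -/
noncomputable def normalForm (n : ℕ) :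
    (Fin (n + 1) → k) × k →ₗ[k] MvPolynomial (Fin 3) k :=
  (Fintype.linearCombination k fun i : Fin (n + 1) => (X 1 : MvPolynomial (Fin 3) k) ^ (i : ℕ)).coprod
    (LinearMap.toSpanSingleton k _ (X 0))

lemma normalCoeff_fst (n : ℕ) (c : k) (P : MvPolynomial (Fin 3) k) (i : Fin (n + 1)) :
    (normalCoeff n c P).1 i = coeff (Finsupp.single 1 (i : ℕ)) P -
      if (i : ℕ) = n then c * coeff (Finsupp.single 0 2) P else 0 := by
  by_cases hi : (i : ℕ) = n <;> simp [normalCoeff, hi]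

lemma normalCoeff_snd (n : ℕ) (c : k) (P : MvPolynomial (Fin 3) k) :
    (normalCoeff n c P).2 = coeff (Finsupp.single 0 1) P := by
  simp [normalCoeff]

lemma normalForm_apply (n : ℕ) (a : Fin (n + 1) → k) (b : k) :
    normalForm n (a, b) = ∑ i, a i • (X 1 : MvPolynomial (Fin 3) k) ^ (i : ℕ) + b • X 0 := by
  simp [normalForm, Fintype.linearCombination_apply]

lemma normalCoeff_normalForm {n : ℕ} (c : k) (y : (Fin (n + 1) → k) × k) :
    normalCoeff n c (normalForm n y) = y := by
  obtain ⟨a, b⟩ := y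
  have h1 (i : ℕ) : ¬ (Finsupp.single (0 : Fin 3) 1 = Finsupp.single 1 i) := by
    intro h; simpa using DFunLike.congr_fun h 0
  have h2 (i : ℕ) : ¬ (Finsupp.single (1 : Fin 3) i = Finsupp.single 0 1) := fun h => h1 i h.symm
  have h3 (i : ℕ) : ¬ (Finsupp.single (1 : Fin 3) i = Finsupp.single 0 2) := by
    intro h; simpa using DFunLike.congr_fun h 0
  have h4 : ¬ (Finsupp.single (0 : Fin 3) 1 = Finsupp.single 0 2) := by
    intro h; simpa using DFunLike.congr_fun h 0
  have h5 (i j : ℕ) : Finsupp.single (1 : Fin 3) i = Finsupp.single 1 j ↔ i = j :=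
    (Finsupp.single_injective 1).eq_iff
  refine Prod.ext (funext fun i => ?_) ?_
  · rw [normalCoeff_fst, normalForm_apply]
    simp [coeff_sum, coeff_X_pow, coeff_X, h1, h3, h4, h5, ← Fin.ext_iff]
  · rw [normalCoeff_snd, normalForm_apply]
    simp [ coeff_sum, coeff_X_pow, coeff_X, h2]

lemma normalCoeff_eq_zero {n : ℕ} (hn : 2 ≤ n) (c : k) {P : MvPolynomial (Fin 3) k}
    (hP : P ∈ simpleIdeal n c) : normalCoeff n c P = 0 := by
  simp only [simpleIdeal, Ideal.mem_span_insert, Ideal.mem_span_singleton'] at hP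
  obtain ⟨a₁, _, ⟨a₂, _, ⟨a₃, _, ⟨a₄, rfl⟩, rfl⟩, rfl⟩, rfl⟩ := hP
  have hX (i : Fin 3) (m : ℕ) : (X i : MvPolynomial (Fin 3) k) ^ m =
      monomial (Finsupp.single i m) 1 := X_pow_eq_monomial
  have h1 : normalCoeff n c (a₁ * X 2) = 0 := by
    refine Prod.ext (funext fun i => ?_) ?_ <;>
    simp [normalCoeff_fst, normalCoeff_snd, coeff_mul_X']
  have h2 : normalCoeff n c (a₂ * (X 0 * X 1)) = 0 := by
    rw [← mul_assoc]
    refine Prod.ext (funext fun i => ?_) ?_ <;>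
    simp [normalCoeff_fst, normalCoeff_snd, coeff_mul_X']
  have h3 : normalCoeff n c (a₃ * (X 0 ^ 2 + C c * X 1 ^ n)) = 0 := by
    rw [hX, hX, C_mul_monomial, mul_add]
    refine Prod.ext (funext fun i => ?_) ?_
    · have := i.2
      have e : n ≤ (i : ℕ) ↔ (i : ℕ) = n := by omega
      by_cases hi : (i : ℕ) = n
      -- The constant coefficient `a` of `a₃` contributes `c * a` to `vⁿ` and `a` to `u²`.
      · simp [normalCoeff_fst, coeff_mul_monomial', hi, show n ≠ 0 by omega]; ring
      · simp [normalCoeff_fst, coeff_mul_monomial', hi, e]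
    · simp [normalCoeff_snd, coeff_mul_monomial', show n ≠ 0 by omega]
  have h4 : normalCoeff n c (a₄ * X 1 ^ (n + 1)) = 0 := by
    rw [hX]
    refine Prod.ext (funext fun i => ?_) ?_
    · simp [normalCoeff_fst, coeff_mul_monomial', -Finsupp.single_add, i.is_le]
    · simp [normalCoeff_snd, coeff_mul_monomial', -Finsupp.single_add]
  simp only [map_add, h1, h2, h3, h4, add_zero]

/-- The subspace `J + ⟨1, v, …, vⁿ, u⟩` contains `1` and is stable under each variable, the only
reductions needed being `u · u ≡ -c vⁿ` and `w ≡ u v ≡ v · vⁿ ≡ 0`. -/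
theorem exists_sub_normalForm_mem (n : ℕ) (c : k) (P : MvPolynomial (Fin 3) k) :
    ∃ y, P - normalForm n y ∈ simpleIdeal n c := by
  set J := simpleIdeal n c with hJ
  have hw : X 2 ∈ J := Ideal.subset_span (by simp)
  have huv : X 0 * X 1 ∈ J := Ideal.subset_span (by simp)
  have huu : X 0 ^ 2 + C c * X 1 ^ n ∈ J := Ideal.subset_span (by simp)
  have hvn : X 1 ^ (n + 1) ∈ J := Ideal.subset_span (by simp)
  let N : Submodule k (MvPolynomial (Fin 3) k) :=
    J.restrictScalars k ⊔ LinearMap.range (normalForm n)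
  have hJN {Q} (h : Q ∈ J) : Q ∈ N := Submodule.mem_sup_left (S := J.restrictScalars k) h
  have hv (i : ℕ) (hi : i ≤ n) : X 1 ^ i ∈ N := Submodule.mem_sup_right
    ⟨(Pi.single ⟨i, by omega⟩ 1, 0), by simp [normalForm]⟩
  have hu : X 0 ∈ N := Submodule.mem_sup_right ⟨(0, 1), by simp [normalForm]⟩
  have hu2 : X 0 * X 0 ∈ N := by
    have := N.sub_mem (hJN huu) (N.smul_mem c (hv n le_rfl))
    rwa [smul_eq_C_mul, add_sub_cancel_right, sq] at this
  have key (j : Fin 3) : N ≤ N.comap (LinearMap.mulLeft k (X j)) := by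
    refine sup_le (fun Q hQ => hJN (J.mul_mem_left _ hQ)) ?_
    rintro _ ⟨⟨a, b⟩, rfl⟩
    rw [normalForm_apply]
    refine Submodule.add_mem _ (Submodule.sum_mem _ fun i _ => Submodule.smul_mem _ _ ?_)
      (Submodule.smul_mem _ _ ?_) <;>
    simp only [Submodule.mem_comap, LinearMap.mulLeft_apply]
    · fin_cases j
      · obtain ⟨_ | i, hi⟩ := i
        · simpa using hu
        · have := hJN (J.mul_mem_right (X 1 ^ i) huv)
          simpa [pow_succ', mul_assoc] using this
      · obtain ⟨i, hi⟩ := i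
        rcases (Nat.lt_succ_iff.mp hi).lt_or_eq with h | rfl
        · simpa [pow_succ'] using hv (i + 1) h
        · simpa [pow_succ'] using hJN hvn
      · exact hJN (J.mul_mem_right _ hw)
    · fin_cases j
      · exact hu2
      · exact hJN (mul_comm (X 0 : MvPolynomial (Fin 3) k) (X 1) ▸ huv)
      · exact hJN (J.mul_mem_right _ hw)
  have hP : P ∈ N := by
    induction P using MvPolynomial.induction_on with
    | C a => simpa [smul_eq_C_mul] using N.smul_mem a (hv 0 (Nat.zero_le n))
    | add p q hp hq => exact N.add_mem hp hq
    | mul_X p j hp => simpa [mul_comm] using key j hp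
  obtain ⟨Q, hQ, _, ⟨y, rfl⟩, rfl⟩ := Submodule.mem_sup.mp hP
  exact ⟨y, by simpa using hQ⟩

lemma ker_normalCoeff {n : ℕ} (hn : 2 ≤ n) (c : k) :
    (simpleIdeal n c).restrictScalars k = LinearMap.ker (normalCoeff n c) := by
  ext P
  refine ⟨fun h => normalCoeff_eq_zero hn c h, fun h => ?_⟩
  obtain ⟨y, hy⟩ := exists_sub_normalForm_mem n c P
  have h0 := normalCoeff_eq_zero hn c hy
  rw [map_sub, normalCoeff_normalForm, LinearMap.mem_ker.mp h, zero_sub, neg_eq_zero] at h0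
  simpa [h0] using hy

lemma finrank_quotient_simpleIdeal {n : ℕ} (hn : 2 ≤ n) (c : k) :
    Module.finrank k (MvPolynomial (Fin 3) k ⧸ simpleIdeal n c) = n + 2 := by
  have hs : Function.Surjective (normalCoeff n c) :=
    fun y => ⟨normalForm n y, normalCoeff_normalForm c y⟩
  rw [← (Submodule.Quotient.restrictScalarsEquiv k (simpleIdeal n c)).finrank_eq,
    ((Submodule.quotEquivOfEq _ _ (ker_normalCoeff hn c)).trans
      ((normalCoeff n c).quotKerEquivOfSurjective hs)).finrank_eq]
  simp

/-- Up to invertible scalars, `w`, `uv` and `u² + 4(n+1)vⁿ` are the partial derivatives of `g`, and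
`4 v^{n+1} = w · w - u · (u v) - g`. -/
lemma tjurinaIdeal_eq (h2 : (2 : k) ≠ 0) (n : ℕ) :
    Ideal.span ({(X 2 : MvPolynomial (Fin 3) k) ^ 2 - X 0 ^ 2 * X 1 - 4 * X 1 ^ (n + 1),
          pderiv 0 ((X 2 : MvPolynomial (Fin 3) k) ^ 2 - X 0 ^ 2 * X 1 - 4 * X 1 ^ (n + 1)),
          pderiv 1 ((X 2 : MvPolynomial (Fin 3) k) ^ 2 - X 0 ^ 2 * X 1 - 4 * X 1 ^ (n + 1)),
          pderiv 2 ((X 2 : MvPolynomial (Fin 3) k) ^ 2 - X 0 ^ 2 * X 1 - 4 * X 1 ^ (n + 1))} :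
          Set (MvPolynomial (Fin 3) k)) = simpleIdeal n (4 * (n + 1) : k) := by
  have h4 (i : Fin 3) : pderiv i (4 : MvPolynomial (Fin 3) k) = 0 :=
    Derivation.map_natCast (pderiv i) 4
  have d0 : pderiv 0 ((X 2 : MvPolynomial (Fin 3) k) ^ 2 - X 0 ^ 2 * X 1 - 4 * X 1 ^ (n + 1)) =
      -2 * (X 0 * X 1) := by
    simp [pderiv_X, Derivation.leibniz_pow, h4]; ring
  have d1 : pderiv 1 ((X 2 : MvPolynomial (Fin 3) k) ^ 2 - X 0 ^ 2 * X 1 - 4 * X 1 ^ (n + 1)) =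
      -(X 0 ^ 2 + C (4 * (n + 1) : k) * X 1 ^ n) := by
    have hC : (C 4 : MvPolynomial (Fin 3) k) = 4 := map_ofNat C 4
    simp [pderiv_X, Derivation.leibniz_pow, h4, hC]; ring
  have d2 : pderiv 2 ((X 2 : MvPolynomial (Fin 3) k) ^ 2 - X 0 ^ 2 * X 1 - 4 * X 1 ^ (n + 1)) =
      2 * X 2 := by
    simp [pderiv_X, Derivation.leibniz_pow, h4]
  rw [d0, d1, d2]
  have hh : (C (2⁻¹ : k) : MvPolynomial (Fin 3) k) * 2 = 1 := by
    rw [← map_ofNat (C : k →+* MvPolynomial (Fin 3) k) 2, ← C_mul, inv_mul_cancel₀ h2, C_1]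
  set H : MvPolynomial (Fin 3) k := C (2⁻¹ : k)
  set Q : MvPolynomial (Fin 3) k := X 0 ^ 2 + C (4 * (n + 1) : k) * X 1 ^ n
  apply le_antisymm <;> rw [simpleIdeal, Ideal.span_le]
  · set J := Ideal.span ({X 2, X 0 * X 1, Q, X 1 ^ (n + 1)} : Set (MvPolynomial (Fin 3) k))
    have hw : X 2 ∈ J := Ideal.subset_span (by simp)
    have huv : X 0 * X 1 ∈ J := Ideal.subset_span (by simp)
    have hQ : Q ∈ J := Ideal.subset_span (by simp)
    have hvn : X 1 ^ (n + 1) ∈ J := Ideal.subset_span (by simp)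
    rintro x (rfl | rfl | rfl | rfl)
    · have := J.sub_mem (J.sub_mem (J.mul_mem_left (X 2) hw) (J.mul_mem_left (X 0) huv))
        (J.mul_mem_left 4 hvn)
      rw [SetLike.mem_coe]
      convert this using 1; ring
    · exact J.mul_mem_left _ huv
    · exact J.neg_mem hQ
    · exact J.mul_mem_left _ hw
  · set g : MvPolynomial (Fin 3) k := X 2 ^ 2 - X 0 ^ 2 * X 1 - 4 * X 1 ^ (n + 1) with hg
    set J := Ideal.span ({g, -2 * (X 0 * X 1), -Q, 2 * X 2} : Set (MvPolynomial (Fin 3) k))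
    have hw : X 2 ∈ J := by
      have := J.mul_mem_left H (Ideal.subset_span (by simp) : 2 * X 2 ∈ J)
      rwa [← mul_assoc, hh, one_mul] at this
    have huv : X 0 * X 1 ∈ J := by
      have := J.mul_mem_left (-H) (Ideal.subset_span (by simp) : -2 * (X 0 * X 1) ∈ J)
      rwa [← mul_assoc, neg_mul_neg, hh, one_mul] at this
    rintro x (rfl | rfl | rfl | rfl)
    · exact hw
    · exact huv
    · exact neg_mem_iff.mp (Ideal.subset_span (by simp) : -Q ∈ J)
    · have := J.mul_mem_left (H * H) (J.sub_mem
        (J.sub_mem (J.mul_mem_left (X 2) hw) (J.mul_mem_left (X 0) huv))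
        (Ideal.subset_span (by simp) : g ∈ J))
      rw [SetLike.mem_coe]
      convert this using 1
      rw [hg]
      linear_combination (-(H * 2) - 1) * X 1 ^ (n + 1) * hh

end TjurinaD

/--
Tjurina algebra of the `D_{n+2}`-singularity `w² - u²v - 4v^{n+1}` in characteristic `p ≥ 3`:
for `n ≥ 2`, the algebra `k[u,v,w]/(g, ∂_u g, ∂_v g, ∂_w g)` is `(n+2)`-dimensional over `k`.
-/
theorem tjurina_dimension_D_singularity (k : Type) [Field k] (p : ℕ) (hp : p.Prime)
    (h3 : 3 ≤ p) [CharP k p] (n : ℕ) (hn : 2 ≤ n) :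
    Module.finrank k
      (MvPolynomial (Fin 3) k ⧸
        Ideal.span ({(X 2 : MvPolynomial (Fin 3) k) ^ 2 - X 0 ^ 2 * X 1 - 4 * X 1 ^ (n + 1),
          pderiv 0 ((X 2 : MvPolynomial (Fin 3) k) ^ 2 - X 0 ^ 2 * X 1 - 4 * X 1 ^ (n + 1)),
          pderiv 1 ((X 2 : MvPolynomial (Fin 3) k) ^ 2 - X 0 ^ 2 * X 1 - 4 * X 1 ^ (n + 1)),
          pderiv 2 ((X 2 : MvPolynomial (Fin 3) k) ^ 2 - X 0 ^ 2 * X 1 - 4 * X 1 ^ (n + 1))} :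
          Set (MvPolynomial (Fin 3) k))) = n + 2 := by
  have h2 : (2 : k) ≠ 0 := by
    intro h
    have := (CharP.cast_eq_zero_iff k p 2).mp (by exact_mod_cast h)
    have := Nat.le_of_dvd two_pos this
    omega
  rw [TjurinaD.tjurinaIdeal_eq h2 n]
  exact TjurinaD.finrank_quotient_simpleIdeal hn _
end
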